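/- Let J, K be positive integers, let L : Fin J → Fin K → ℝ be a fixed matrix, and let G be a random J × K matrix whose entries are i.i.d. standard real Gaussians with law μ = Measure.pi (fun _ : Fin J × Fin K => gaussianReal 0 1). For a real J × J matrix B set Δ(B) := L ∘ G − B * G. Then for every real J × J matrix B, ∫ ‖Δ(B)‖_F² dμ ≥ ∑_{j<J} ( ∑_{k<K} (L j k)² − (1/K) · (∑_{k<K} L j k)² ), and equality holds when B = L̃, where L̃ is the diagonal matrix with diagonal entries L̃ j j = (1/K) · ∑_{k<K} L j k (the row means of L). -/

import Mathlib

open MeasureTheory ProbabilityTheory Finset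

/-!
Entry `(j, k)` of `L ∘ G − B * G` is the linear form `∑ i, (δ_{ij} L j k − B j i) G i k` in the
independent standard Gaussians `G i k`, which are orthonormal in `L²`. Hence the expected squared
Frobenius norm equals `∑ j k i, (δ_{ij} L j k − B j i)²` (`integral_frobenius`). Dropping the terms
with `i ≠ j`, which vanish for diagonal `B`, leaves `∑ k, (L j k − B j j)²` for each row `j`;
completing the square in `B j j` (`sum_sub_sq`) shows that this is minimal exactly at the row mean,
with the stated value.
-/

lemma memLp_eval_pi_gaussian {ι : Type*} [Fintype ι] (a : ι) :
    MemLp (fun ω : ι → ℝ => ω a) 2 (Measure.pi fun _ : ι => gaussianReal 0 1) :=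
  (memLp_id_gaussianReal (μ := 0) (v := 1) 2).comp_measurePreserving
    (measurePreserving_eval (fun _ : ι => gaussianReal 0 1) a)

lemma integral_eval_mul_eval {ι : Type*} [Fintype ι] [DecidableEq ι] (a b : ι) :
    ∫ ω : ι → ℝ, ω a * ω b ∂(Measure.pi fun _ : ι => gaussianReal 0 1)
      = if a = b then 1 else 0 := by
  have mean (c : ι) : ∫ ω : ι → ℝ, ω c ∂(Measure.pi fun _ : ι => gaussianReal 0 1) = 0 := by
    have := integral_comp_eval (μ := fun _ : ι => gaussianReal 0 1) (i := c)
      (f := fun x : ℝ => x) aestronglyMeasurable_id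
    rw [this, integral_id_gaussianReal]
  split_ifs with h
  · subst h
    have h1 := integral_comp_eval (μ := fun _ : ι => gaussianReal 0 1) (i := a)
      (f := fun x : ℝ => x * x) (by fun_prop)
    have h2 := variance_id_gaussianReal (μ := 0) (v := 1)
    rw [variance_of_integral_eq_zero aemeasurable_id (by simp)] at h2
    rw [h1]
    simpa [sq] using h2
  · have hi : iIndepFun (fun (i : ι) (ω : ι → ℝ) => ω i)
        (Measure.pi fun _ : ι => gaussianReal 0 1) :=
      iIndepFun_pi (X := fun _ x => x) fun _ => aemeasurable_id
    rw [(hi.indepFun h).integral_fun_mul_eq_mul_integral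
      (memLp_eval_pi_gaussian a).1 (memLp_eval_pi_gaussian b).1, mean, zero_mul]

lemma integral_sq_linear_form {ι κ : Type*} [Fintype ι] [Fintype κ] {e : κ → ι}
    (he : Function.Injective e) (c : κ → ℝ) :
    Integrable (fun ω : ι → ℝ => (∑ i, c i * ω (e i)) ^ 2)
      (Measure.pi fun _ : ι => gaussianReal 0 1) ∧
    ∫ ω : ι → ℝ, (∑ i, c i * ω (e i)) ^ 2 ∂(Measure.pi fun _ : ι => gaussianReal 0 1)
      = ∑ i, c i ^ 2 := by
  classical
  have hexp (ω : ι → ℝ) : (∑ i, c i * ω (e i)) ^ 2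
      = ∑ i, ∑ i', (c i * c i') * (ω (e i) * ω (e i')) := by
    rw [sq, sum_mul_sum]
    exact sum_congr rfl fun i _ => sum_congr rfl fun i' _ => by ring
  have hint (i i' : κ) : Integrable (fun ω : ι → ℝ => (c i * c i') * (ω (e i) * ω (e i')))
      (Measure.pi fun _ : ι => gaussianReal 0 1) :=
    ((memLp_eval_pi_gaussian (e i)).integrable_mul (memLp_eval_pi_gaussian (e i'))).const_mul _
  simp_rw [hexp]
  refine ⟨integrable_finsetSum _ fun i _ => integrable_finsetSum _ fun i' _ => hint i i', ?_⟩
  rw [integral_finsetSum _ fun i _ => integrable_finsetSum _ fun i' _ => hint i i']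
  refine sum_congr rfl fun i _ => ?_
  rw [integral_finsetSum _ fun i' _ => hint i i']
  simp_rw [integral_const_mul, integral_eval_mul_eval, he.eq_iff]
  simp [sq]

lemma integral_frobenius {J K : ℕ} (L : Fin J → Fin K → ℝ) (B : Matrix (Fin J) (Fin J) ℝ) :
    ∫ ω : (Fin J × Fin K) → ℝ,
        (∑ j : Fin J, ∑ k : Fin K,
          ((Matrix.hadamard (Matrix.of L) (Matrix.of fun j k => ω (j, k))
            - B * Matrix.of fun j k => ω (j, k)) j k) ^ 2)
        ∂(Measure.pi fun _ : Fin J × Fin K => gaussianReal 0 1)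
      = ∑ j, ∑ k, ∑ i, ((if i = j then L j k else 0) - B j i) ^ 2 := by
  have hentry (ω : Fin J × Fin K → ℝ) (j : Fin J) (k : Fin K) :
      (Matrix.hadamard (Matrix.of L) (Matrix.of fun j k => ω (j, k))
        - B * Matrix.of fun j k => ω (j, k)) j k
      = ∑ i, ((if i = j then L j k else 0) - B j i) * ω (i, k) := by
    simp [Matrix.mul_apply, sub_mul, sum_sub_distrib, ite_mul]
  have hform (j : Fin J) (k : Fin K) :=
    integral_sq_linear_form (e := fun i : Fin J => (i, k)) (Prod.mk_left_injective k)
      fun i => (if i = j then L j k else 0) - B j i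
  simp_rw [hentry]
  rw [integral_finsetSum _ fun j _ => integrable_finsetSum _ fun k _ => (hform j k).1]
  refine sum_congr rfl fun j _ => ?_
  rw [integral_finsetSum _ fun k _ => (hform j k).1]
  exact sum_congr rfl fun k _ => (hform j k).2

lemma sum_sub_sq {K : ℕ} (hK : 0 < K) (l : Fin K → ℝ) (b : ℝ) :
    ∑ k, (l k - b) ^ 2 = (∑ k, l k ^ 2 - (1 / (K : ℝ)) * (∑ k, l k) ^ 2)
      + K * (b - (1 / (K : ℝ)) * ∑ k, l k) ^ 2 := by
  have hK' : (K : ℝ) ≠ 0 := by positivity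
  have hexp : ∑ k, (l k - b) ^ 2 = ∑ k, l k ^ 2 - 2 * (∑ k, l k) * b + K * b ^ 2 := by
    simp [sub_sq, sum_add_distrib, sum_sub_distrib, mul_sum, sum_mul]
  rw [hexp]
  field_simp
  ring

/-- The expected squared Frobenius norm of `Δ(B) = L ∘ G − B * G` is bounded below
by `∑_j (∑_k L j k ^ 2 − (1/K) (∑_k L j k)^2)`, with equality when `B` is the diagonal matrix
of row means of `L`. -/
theorem expected_sq_frobenius_norm_ge_min_and_eq_at_row_means
    (J K : ℕ) (hJ : 0 < J) (hK : 0 < K)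
    (L : Fin J → Fin K → ℝ) :
    (∀ B : Matrix (Fin J) (Fin J) ℝ,
      (∫ ω : (Fin J × Fin K) → ℝ,
          (∑ j : Fin J, ∑ k : Fin K,
            ((Matrix.hadamard (Matrix.of L) (Matrix.of fun j k => ω (j, k))
              - B * Matrix.of fun j k => ω (j, k)) j k) ^ 2)
          ∂(Measure.pi fun _ : Fin J × Fin K => gaussianReal 0 1))
        ≥ ∑ j : Fin J, ((∑ k : Fin K, (L j k) ^ 2)
            - (1 / (K : ℝ)) * (∑ k : Fin K, L j k) ^ 2))
    ∧
    (∫ ω : (Fin J × Fin K) → ℝ,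
        (∑ j : Fin J, ∑ k : Fin K,
          ((Matrix.hadamard (Matrix.of L) (Matrix.of fun j k => ω (j, k))
            - (Matrix.diagonal fun j => (1 / (K : ℝ)) * ∑ k : Fin K, L j k)
              * Matrix.of fun j k => ω (j, k)) j k) ^ 2)
        ∂(Measure.pi fun _ : Fin J × Fin K => gaussianReal 0 1))
      = ∑ j : Fin J, ((∑ k : Fin K, (L j k) ^ 2)
          - (1 / (K : ℝ)) * (∑ k : Fin K, L j k) ^ 2) := by
  constructor
  · intro B
    rw [integral_frobenius, ge_iff_le]
    refine sum_le_sum fun j _ => ?_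
    calc _ ≤ ∑ k, (L j k - B j j) ^ 2 := by
            rw [sum_sub_sq hK]
            exact le_add_of_nonneg_right (by positivity)
      _ ≤ _ := sum_le_sum fun k _ => by
            simpa using single_le_sum
              (f := fun i => ((if i = j then L j k else 0) - B j i) ^ 2)
              (fun i _ => sq_nonneg _) (mem_univ j)
  · rw [integral_frobenius]
    refine sum_congr rfl fun j _ => ?_
    trans ∑ k, (L j k - (1 / (K : ℝ)) * ∑ k, L j k) ^ 2
    · refine sum_congr rfl fun k _ => ?_
      rw [sum_eq_single j (fun i _ hi => by simp [hi, Matrix.diagonal_apply_ne' _ hi]) (by simp)]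
      simp
    · rw [sum_sub_sq hK]
      simp
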